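/- arXiv:1411.2397 — 2 statements merged into one kernel-verified Lean document; each statement's English description precedes it below -/
import Mathlib

section
/- Let F be a finite field of characteristic ≠ 2 and A, B, D ∈ F with D ≠ 0. Then S^{(D;A,B)} has a regular F-rational point: there exists a nonzero tuple (t0,…,t4) ∈ F^5 satisfying both defining equations at which the 2×5 Jacobian matrix has rank 2. -/
open IsDedekindDomain NumberField

/-- The affine equations defining the surface `S^{(D;A,B)}`:
`t0·t1 = t2² − D·t3²` and `(t0 + A·t1)(t0 + B·t1) = t2² − D·t4²`. -/
def SPoint {F : Type*} [Field F] (A B D : F) (t : Fin 5 → F) : Prop :=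
  t 0 * t 1 = t 2 ^ 2 - D * t 3 ^ 2 ∧
  (t 0 + A * t 1) * (t 0 + B * t 1) = t 2 ^ 2 - D * t 4 ^ 2

/-- `S^{(D;A,B)}(F) ≠ ∅`: there is a nonzero solution of the two equations over `F`. -/
def HasPoint (F : Type*) [Field F] (A B D : F) : Prop :=
  ∃ t : Fin 5 → F, t ≠ 0 ∧ SPoint A B D t


/-- The Jacobian matrix of the two defining equations at a point `t`. -/
noncomputable def jacobian {F : Type*} [Field F] (A B D : F) (t : Fin 5 → F) :
    Matrix (Fin 2) (Fin 5) F :=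
  !![t 1, t 0, -2 * t 2, 2 * D * t 3, 0;
     2 * t 0 + (A + B) * t 1, (A + B) * t 0 + 2 * A * B * t 1, -2 * t 2, 0, 2 * D * t 4]

/-!
The quadric `T0·T1 = T2² − D·T3²` is a cone with vertex `(0:0:0:0:1)`, and for `A ≠ B` the quadric
`(T0 + A·T1)(T0 + B·T1) = T2² − D·T4²` is a cone with vertex `(0:0:0:1:0)`; neither vertex lies on
the other quadric. So a point with `t4 ≠ 0` is regular, and when `A ≠ B` so is a point with
`t3 ≠ 0`, whereas a point with `t3 = t4 = 0` gives a root `x = t0/t1` of `(x + A)(x + B) = x`.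
If there is no root, then for `A ≠ B` any point found by Chevalley–Warning is regular, and for
`A = B` the hyperplanes `T4 = 0` and `T2 = T0 + A·T1` cut out the conic `T0·T1 = T2² − D·T3²`, whose
points with `t2 ≠ 0` are regular. If there is a root and `D` is not a square, then norms from
`F(√D)` provide a point with `t4 ≠ 0`; if `D` is a square, there is a regular point with `t1 = 0`.
-/

theorem rank_eq_card_of_det_submatrix_ne_zero {m n K : Type*} [Fintype m] [DecidableEq m]
    [Fintype n] [Field K] (M : Matrix m n K) (f : m → n) (h : (M.submatrix id f).det ≠ 0) :
    M.rank = Fintype.card m := by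
  refine le_antisymm M.rank_le_card_height ?_
  calc Fintype.card m
      = (M.submatrix id f).rank := (Matrix.linearIndependent_rows_of_det_ne_zero h).rank_matrix.symm
    _ ≤ M.rank := M.rank_submatrix_le id f

section FiniteField

variable {F : Type*} [Field F] [Finite F]

theorem exists_ne_zero_forall_eval_eq_zero {σ ι : Type*} [Fintype σ] [Fintype ι]
    (f : ι → MvPolynomial σ F) (hdeg : ∑ i, (f i).totalDegree < Fintype.card σ)
    (h0 : ∀ i, MvPolynomial.constantCoeff (f i) = 0) :
    ∃ t : σ → F, t ≠ 0 ∧ ∀ i, MvPolynomial.eval t (f i) = 0 := by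
  classical
  have := Fintype.ofFinite F
  let zero : {t : σ → F // ∀ i, MvPolynomial.eval t (f i) = 0} := ⟨0, fun i => by simp [h0 i]⟩
  have hdvd := char_dvd_card_solutions_of_fintype_sum_lt (ringChar F) hdeg
  have hcard : 1 < Fintype.card {t : σ → F // ∀ i, MvPolynomial.eval t (f i) = 0} :=
    (CharP.char_is_prime F (ringChar F)).one_lt.trans_le
      (Nat.le_of_dvd (Fintype.card_pos_iff.mpr ⟨zero⟩) hdvd)
  obtain ⟨⟨t, ht⟩, hne⟩ := Fintype.exists_ne_of_one_lt_card hcard zero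
  exact ⟨t, fun h => hne (Subtype.ext h), ht⟩

theorem exists_sq_add_mul_add_eq_mul_sq {D : F} (hD : D ≠ 0) (b c : F) :
    ∃ u v : F, u ^ 2 + b * u + c = D * v ^ 2 := by
  have := Fintype.ofFinite F
  by_cases hF : ringChar F = 2
  · obtain ⟨v, hv⟩ := FiniteField.isSquare_of_char_two hF (c / D)
    exact ⟨0, v, by rw [sq v, ← hv]; field_simp; ring⟩
  · obtain ⟨u, v, h⟩ := FiniteField.exists_root_sum_quadratic
      (f := .C 1 * .X ^ 2 + .C b * .X + .C c) (g := .C (-D) * .X ^ 2)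
      (Polynomial.degree_quadratic one_ne_zero)
      (Polynomial.degree_C_mul_X_pow 2 (neg_ne_zero.mpr hD))
      (FiniteField.odd_card_of_char_ne_two hF)
    simp only [Polynomial.eval_add, Polynomial.eval_mul, Polynomial.eval_pow, Polynomial.eval_C,
      Polynomial.eval_X] at h
    exact ⟨u, v, by linear_combination h⟩

theorem exists_sq_sub_mul_sq_eq_of_ne_one (hF : ringChar F ≠ 2) {D c : F} (hD : D ≠ 0)
    (hD1 : D ≠ 1) (hc : c ≠ 0) : ∃ u v : F, v ≠ 0 ∧ u ^ 2 - D * v ^ 2 = c := by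
  obtain ⟨u, v, h⟩ := exists_sq_add_mul_add_eq_mul_sq hD 0 (-c)
  by_cases hv : v = 0
  · subst hv
    have hu : u ≠ 0 := by
      rintro rfl
      exact hc (by linear_combination -h)
    have h1D : 1 - D ≠ 0 := sub_ne_zero.mpr hD1.symm
    -- Multiply `u` by `(1 + √D)² / (1 - D)`, which has norm `1`.
    refine ⟨u * (1 + D) / (1 - D), 2 * u / (1 - D),
      div_ne_zero (mul_ne_zero (Ring.two_ne_zero hF) hu) h1D, ?_⟩
    field_simp
    linear_combination (1 - D) ^ 2 * h
  · exact ⟨u, v, hv, by linear_combination h⟩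

end FiniteField

/-- `t` is a nonzero solution of the equations of `S^{(D;A,B)}` at which the Jacobian matrix has
full rank, i.e. `t` represents a regular point of the surface. -/
def IsRegularPoint {F : Type*} [Field F] (A B D : F) (t : Fin 5 → F) : Prop :=
  t ≠ 0 ∧ SPoint A B D t ∧ (jacobian A B D t).rank = 2

namespace SPoint

variable {F : Type*} [Field F] {A B D : F} {t : Fin 5 → F}

theorem isRegularPoint_of_minor_ne_zero (ht : SPoint A B D t) (i j : Fin 5)
    (h : ((jacobian A B D t).submatrix id ![i, j]).det ≠ 0) : IsRegularPoint A B D t := by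
  refine ⟨?_, ht, by simpa using rank_eq_card_of_det_submatrix_ne_zero _ _ h⟩
  rintro rfl
  have hJ : jacobian A B D 0 = 0 := by
    ext k l
    fin_cases k <;> fin_cases l <;> simp [jacobian]
  simp [hJ] at h

theorem isRegularPoint_of_t2_ne_zero_of_t3_ne_zero (hF : ringChar F ≠ 2) (hD : D ≠ 0)
    (ht : SPoint A B D t) (h2 : t 2 ≠ 0) (h3 : t 3 ≠ 0) : IsRegularPoint A B D t :=
  ht.isRegularPoint_of_minor_ne_zero 2 3 <| by
    simp [jacobian, Matrix.det_fin_two, Ring.two_ne_zero hF, hD, h2, h3]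

theorem isRegularPoint_of_t4_ne_zero (hF : ringChar F ≠ 2) (hD : D ≠ 0) (ht : SPoint A B D t)
    (h4 : t 4 ≠ 0) : IsRegularPoint A B D t := by
  by_contra hsing
  have minor (i j) : ((jacobian A B D t).submatrix id ![i, j]).det = 0 :=
    not_not.mp (mt (ht.isRegularPoint_of_minor_ne_zero i j) hsing)
  have h2F := Ring.two_ne_zero hF
  have h1 : t 1 = 0 := by simpa [jacobian, Matrix.det_fin_two, h2F, hD, h4] using minor 0 4
  have h0 : t 0 = 0 := by simpa [jacobian, Matrix.det_fin_two, h2F, hD, h4] using minor 1 4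
  have h2 : t 2 = 0 := by simpa [jacobian, Matrix.det_fin_two, h2F, hD, h4] using minor 2 4
  have := ht.2
  simp [h0, h1, h2, hD, h4] at this

theorem isRegularPoint_of_t3_ne_zero (hF : ringChar F ≠ 2) (hAB : A ≠ B) (hD : D ≠ 0)
    (ht : SPoint A B D t) (h3 : t 3 ≠ 0) : IsRegularPoint A B D t := by
  by_contra hsing
  have minor (i j) : ((jacobian A B D t).submatrix id ![i, j]).det = 0 :=
    not_not.mp (mt (ht.isRegularPoint_of_minor_ne_zero i j) hsing)
  have h2F := Ring.two_ne_zero hF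
  have hd0 : 2 * t 0 + (A + B) * t 1 = 0 := by
    simpa [jacobian, Matrix.det_fin_two, h2F, hD, h3] using minor 0 3
  have hd1 : (A + B) * t 0 + 2 * A * B * t 1 = 0 := by
    simpa [jacobian, Matrix.det_fin_two, h2F, hD, h3] using minor 1 3
  have h2 : t 2 = 0 := by simpa [jacobian, Matrix.det_fin_two, h2F, hD, h3] using minor 2 3
  have h1 : t 1 = 0 := by
    refine (mul_eq_zero.mp ?_).resolve_left (pow_ne_zero 2 (sub_ne_zero.mpr hAB))
    linear_combination (A + B) * hd0 - 2 * hd1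
  have := ht.1
  simp [h1, h2, hD, h3] at this

theorem exists_root_of_t3_eq_zero_of_t4_eq_zero (ht : SPoint A B D t) (h : t ≠ 0) (h3 : t 3 = 0)
    (h4 : t 4 = 0) : ∃ x : F, (x + A) * (x + B) = x := by
  obtain ⟨hN₁, hN₂⟩ := ht
  simp only [h3, h4, ne_eq, OfNat.ofNat_ne_zero, not_false_eq_true, zero_pow, mul_zero,
    sub_zero] at hN₁ hN₂
  have h1 : t 1 ≠ 0 := by
    intro h1
    have h2 : t 2 = 0 := by simpa [h1] using hN₁.symm
    have h0 : t 0 = 0 := by simpa [h1, h2] using hN₂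
    exact h (funext fun i => by fin_cases i <;> assumption)
  refine ⟨t 0 / t 1, ?_⟩
  field_simp
  linear_combination hN₂ - hN₁

end SPoint

section Field

variable {F : Type*} [Field F] {A B D : F}

theorem exists_isRegularPoint_of_isSquare (hF : ringChar F ≠ 2) (hD : D ≠ 0) (hsq : IsSquare D) :
    ∃ t, IsRegularPoint A B D t := by
  obtain ⟨d, rfl⟩ := hsq
  have hpt : SPoint A B (d * d) ![d, 0, d, 1, 0] := by
    constructor <;> simp only [Matrix.cons_val] <;> ring
  exact ⟨_, hpt.isRegularPoint_of_t2_ne_zero_of_t3_ne_zero hF hD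
    (by simpa using hD) (by simp)⟩

theorem exists_isRegularPoint_of_mul_eq_zero_of_add_eq_one (hF : ringChar F ≠ 2) (hD : D ≠ 0)
    (hD1 : D ≠ 1) (hmul : A * B = 0) (hadd : A + B = 1) : ∃ t, IsRegularPoint A B D t := by
  -- With `t2 = 0` and `t1 = 1` the equations read `t0 = -D·t3²` and `1 - D·t3² = (t4/t3)²`;
  -- the latter is solved by `(1 + D)² - 4D = (1 - D)²`.
  have hpt : SPoint A B D ![-4 * D, (1 + D) ^ 2, 0, 2 * (1 + D), 2 * (1 - D)] := by
    constructor
    · simp only [Matrix.cons_val]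
      ring
    · simp only [Matrix.cons_val]
      linear_combination (1 + D) ^ 4 * hmul - 4 * D * (1 + D) ^ 2 * hadd
  exact ⟨_, hpt.isRegularPoint_of_t4_ne_zero hF hD
    (mul_ne_zero (Ring.two_ne_zero hF) (sub_ne_zero.mpr hD1.symm))⟩

end Field

section FiniteField

variable {F : Type*} [Field F] [Finite F] {A B D : F}

theorem exists_isRegularPoint_of_root_ne_zero (hF : ringChar F ≠ 2) (hD : D ≠ 0) (hD1 : D ≠ 1)
    {x : F} (hx : x ≠ 0) (hroot : (x + A) * (x + B) = x) : ∃ t, IsRegularPoint A B D t := by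
  obtain ⟨u, v, hv, huv⟩ := exists_sq_sub_mul_sq_eq_of_ne_one hF hD hD1 hx
  have hpt : SPoint A B D ![x, 1, u, v, v] := by
    simp [SPoint, hroot, huv]
  exact ⟨_, hpt.isRegularPoint_of_t4_ne_zero hF hD hv⟩

theorem exists_isRegularPoint_of_root (hF : ringChar F ≠ 2) (hD : D ≠ 0) (hD1 : D ≠ 1)
    {x : F} (hroot : (x + A) * (x + B) = x) : ∃ t, IsRegularPoint A B D t := by
  by_cases hx : x = 0
  · have hmul : A * B = 0 := by simpa [hx] using hroot
    by_cases hadd : A + B = 1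
    · exact exists_isRegularPoint_of_mul_eq_zero_of_add_eq_one hF hD hD1 hmul hadd
    · have hy : 1 - (A + B) ≠ 0 := sub_ne_zero.mpr (Ne.symm hadd)
      exact exists_isRegularPoint_of_root_ne_zero hF hD hD1 hy (by linear_combination hmul)
  · exact exists_isRegularPoint_of_root_ne_zero hF hD hD1 hx hroot

theorem exists_isRegularPoint_of_eq_of_forall_not_root (hF : ringChar F ≠ 2) (hD : D ≠ 0)
    (hroot : ∀ x : F, (x + A) * (x + A) ≠ x) : ∃ t, IsRegularPoint A A D t := by
  obtain ⟨y, v, hy, hyv⟩ : ∃ y v : F, y ≠ 0 ∧ y ^ 2 - y + A = D * v ^ 2 := by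
    obtain ⟨y, v, h⟩ := exists_sq_add_mul_add_eq_mul_sq hD (-1) A
    -- The conic is symmetric under `y ↦ 1 - y`.
    by_cases hy : y = 0
    · exact ⟨1 - y, v, by simp [hy], by linear_combination h⟩
    · exact ⟨y, v, hy, by linear_combination h⟩
  have hv : v ≠ 0 := by
    rintro rfl
    exact hroot (y - A) (by linear_combination hyv)
  have hpt : SPoint A A D ![y - A, 1, y, v, 0] := by
    constructor
    · simp only [Matrix.cons_val]
      linear_combination -hyv
    · simp only [Matrix.cons_val]
      ring
  exact ⟨_, hpt.isRegularPoint_of_t2_ne_zero_of_t3_ne_zero hF hD hy hv⟩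

open MvPolynomial in
theorem hasPoint_of_finite (A B D : F) : HasPoint F A B D := by
  let f : Fin 2 → MvPolynomial (Fin 5) F :=
    ![X 0 * X 1 - (X 2 ^ 2 - C D * X 3 ^ 2),
      (X 0 + C A * X 1) * (X 0 + C B * X 1) - (X 2 ^ 2 - C D * X 4 ^ 2)]
  have hdeg (i) : (f i).totalDegree ≤ 2 := by
    have hL (a : F) : (X 0 + C a * X 1 : MvPolynomial (Fin 5) F).IsHomogeneous 1 :=
      (isHomogeneous_X F 0).add (isHomogeneous_C_mul_X a 1)
    have hN (j : Fin 5) : (X 2 ^ 2 - C D * X j ^ 2 : MvPolynomial (Fin 5) F).IsHomogeneous 2 :=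
      (isHomogeneous_X_pow 2 2).sub (isHomogeneous_C_mul_X_pow D j 2)
    refine IsHomogeneous.totalDegree_le ?_
    fin_cases i
    · exact ((isHomogeneous_X F 0).mul (isHomogeneous_X F 1)).sub (hN 3)
    · exact ((hL A).mul (hL B)).sub (hN 4)
  obtain ⟨t, ht, hf⟩ := exists_ne_zero_forall_eval_eq_zero f
    ((Finset.sum_le_sum fun i _ => hdeg i).trans_lt (by simp))
    (fun i => by fin_cases i <;> simp [f])
  refine ⟨t, ht, ?_, ?_⟩
  · simpa [f, sub_eq_zero] using hf 0
  · simpa [f, sub_eq_zero] using hf 1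

theorem exists_isRegularPoint_of_ne_of_forall_not_root (hF : ringChar F ≠ 2) (hD : D ≠ 0)
    (hAB : A ≠ B) (hroot : ∀ x : F, (x + A) * (x + B) ≠ x) : ∃ t, IsRegularPoint A B D t := by
  obtain ⟨t, ht0, ht⟩ := hasPoint_of_finite A B D
  refine ⟨t, ?_⟩
  by_cases h4 : t 4 = 0
  · have h3 : t 3 ≠ 0 := by
      intro h3
      obtain ⟨x, hx⟩ := ht.exists_root_of_t3_eq_zero_of_t4_eq_zero ht0 h3 h4
      exact hroot x hx
    exact ht.isRegularPoint_of_t3_ne_zero hF hAB hD h3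
  · exact ht.isRegularPoint_of_t4_ne_zero hF hD h4

end FiniteField

/-- Corollary 6: over a finite field `F` of characteristic `≠ 2`, for any `A, B, D ∈ F`
with `D ≠ 0`, the surface `S^{(D;A,B)}` has a regular `F`-rational point. -/
theorem regular_point_over_finite_field (F : Type*) [Field F] [Fintype F]
    (hchar : ringChar F ≠ 2) (A B D : F) (hD : D ≠ 0) :
    ∃ t : Fin 5 → F, t ≠ 0 ∧ SPoint A B D t ∧ (jacobian A B D t).rank = 2 := by
  change ∃ t, IsRegularPoint A B D t
  by_cases hsq : IsSquare D
  · exact exists_isRegularPoint_of_isSquare hchar hD hsq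
  have hD1 : D ≠ 1 := fun h => hsq (h ▸ IsSquare.one)
  by_cases hroot : ∃ x : F, (x + A) * (x + B) = x
  · obtain ⟨x, hx⟩ := hroot
    exact exists_isRegularPoint_of_root hchar hD hD1 hx
  push Not at hroot
  obtain rfl | hAB := eq_or_ne A B
  · exact exists_isRegularPoint_of_eq_of_forall_not_root hchar hD hroot
  · exact exists_isRegularPoint_of_ne_of_forall_not_root hchar hD hAB hroot
end

section
/- Let F be a finite field of characteristic ≠ 2 with ℓ := #F ≥ 5 elements, and let A, B, D ∈ F with D ≠ 0. Then the number of regular F-rational points of S^{(D;A,B)}, i.e. the number of points (t0:…:t4) ∈ P^4(F) satisfying both defining equations at which the 2×5 Jacobian matrix has rank 2, is at least ℓ² − 4ℓ + 1. -/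
open IsDedekindDomain NumberField

/-!
Let `f` and `g` be the two quadratic forms in five variables and `q = #F`. Every point of the
affine space lies on exactly one member of the pencil spanned by `f` and `g`, except that the common
zeros lie on all `q + 1`; so the number of common zeros is known once the zeros of each member have
been counted. Gauss sums show that a form of odd rank has exactly `q⁴` zeros, and that one of even
rank at least `4` misses this number by at most `q² (q - 1)`.

The member `f` has rank `4`. The member `l f + g` is diagonalised explicitly: it has even rank,
and then rank `4`, exactly when a single one of the factors of `l (l + 1) disc(l)` vanishes, where
`disc` is quadratic; hence there are at most `4` such `l`. A singular point of the surface lies on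
the vertex of a member at a multiple root of this quartic. The surface has at most `5` of them, and
as soon as there is one, at most `3` members `l f + g` have even rank. Since `q ≥ 5`, the bound
gained from the missing member pays for the singular points.
-/

open Finset

lemma exists_isPrimitive_addChar_cyclotomicField (F : Type*) [Field F] [Finite F] :
    ∃ (n : ℕ) (ψ : AddChar F (CyclotomicField n ℚ)), ψ.IsPrimitive := by
  have hF : ringChar ℚ ≠ ringChar F := by
    simpa using (CharP.ringChar_ne_zero_of_finite F).symm
  obtain ⟨n, ψ, hψ⟩ := AddChar.FiniteField.primitiveChar F ℚ hF
  exact ⟨n, ψ, hψ⟩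

lemma card_mul_card_filter_eq_zero {S R X : Type*} [CommRing S] [Fintype S] [DecidableEq S]
    [CommRing R] [IsDomain R] [Fintype X] {ψ : AddChar S R} (hψ : ψ.IsPrimitive) (f : X → S) :
    (Fintype.card S : R) * #{x | f x = 0} = ∑ a, ∑ x, ψ (a * f x) := by
  rw [sum_comm]
  simp_rw [AddChar.sum_mulShift _ hψ]
  simp [← sum_filter, mul_comm]

section DiagonalForms

variable {F : Type*} [Field F] [Fintype F] [DecidableEq F]

lemma sum_addChar_mul_sq {R : Type*} [CommRing R] [IsDomain R] (hF : ringChar F ≠ 2)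
    {ψ : AddChar F R} (hψ : ψ.IsPrimitive) {a : F} (ha : a ≠ 0) :
    ∑ x, ψ (a * x ^ 2) =
      quadraticChar F a * gaussSum ((quadraticChar F).ringHomComp (Int.castRingHom R)) ψ := by
  set χ := (quadraticChar F).ringHomComp (Int.castRingHom R) with hχ
  have hcard (y : F) : (#{x : F | x ^ 2 = y} : R) = χ y + 1 := by
    have h := quadraticChar_card_sqrts hF y
    rw [Set.toFinset_ofPred] at h
    simpa [hχ] using congrArg (Int.cast : ℤ → R) h
  calc ∑ x, ψ (a * x ^ 2)
      = ∑ y, ∑ x with x ^ 2 = y, ψ (a * x ^ 2) := (sum_fiberwise univ _ _).symm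
    _ = ∑ y, (χ y + 1) * ψ.mulShift a y := by
        refine sum_congr rfl fun y _ => ?_
        rw [sum_congr rfl (g := fun _ => ψ (a * y)) (by simp +contextual), sum_const,
          nsmul_eq_mul, hcard, AddChar.mulShift_apply]
    _ = gaussSum χ (ψ.mulShift a) := by
        simp_rw [add_mul, one_mul, sum_add_distrib,
          AddChar.sum_eq_zero_of_ne_one (hψ ha), add_zero, gaussSum]
    _ = χ a * gaussSum χ ψ := by
        have hinv : χ⁻¹ = χ := ((quadraticChar_isQuadratic F).comp _).inv
        simpa [hinv] using gaussSum_mulShift_eq χ ψ (Units.mk0 a ha)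
    _ = _ := by rw [hχ]; simp

variable {ι : Type*} [Fintype ι] [DecidableEq ι]

lemma sum_addChar_mul_sum_mul_sq {R : Type*} [CommRing R] [IsDomain R] (hF : ringChar F ≠ 2)
    {ψ : AddChar F R} (hψ : ψ.IsPrimitive) (w : ι → F) {a : F} (ha : a ≠ 0) :
    ∑ x : ι → F, ψ (a * ∑ i, w i * x i ^ 2) =
      quadraticChar F (a ^ #{i | w i ≠ 0} * ∏ i with w i ≠ 0, w i) *
        gaussSum ((quadraticChar F).ringHomComp (Int.castRingHom R)) ψ ^ #{i | w i ≠ 0} *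
        (Fintype.card F : R) ^ #{i | w i = 0} := by
  have hψsum (g : ι → F) : ψ (∑ i, g i) = ∏ i, ψ (g i) := map_prod ψ.toMonoidHom _ univ
  calc ∑ x : ι → F, ψ (a * ∑ i, w i * x i ^ 2)
      = ∏ i, ∑ y, ψ (a * w i * y ^ 2) := by
        simp_rw [Fintype.prod_sum, mul_sum, mul_assoc, hψsum]
    _ = (∏ i with w i ≠ 0, ∑ y, ψ (a * w i * y ^ 2)) *
          ∏ i with w i = 0, ∑ y, ψ (a * w i * y ^ 2) := by
        rw [← prod_filter_mul_prod_filter_not univ (fun i => w i ≠ 0)]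
        simp
    _ = _ := by
        congr 1
        · rw [prod_congr rfl fun i hi =>
            sum_addChar_mul_sq hF hψ (mul_ne_zero ha (mem_filter.1 hi).2)]
          simp only [prod_mul_distrib, prod_const, ← Int.cast_prod, ← map_prod]
        · rw [prod_congr rfl (g := fun _ => (Fintype.card F : R)) (by simp +contextual)]
          simp

lemma card_mul_card_zeros_sum_mul_sq {R : Type*} [CommRing R] [IsDomain R] (hF : ringChar F ≠ 2)
    {ψ : AddChar F R} (hψ : ψ.IsPrimitive) (w : ι → F) :
    (Fintype.card F : R) * #{x : ι → F | ∑ i, w i * x i ^ 2 = 0} =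
      (Fintype.card F : R) ^ Fintype.card ι +
      ∑ a ∈ univ.erase 0, (quadraticChar F (a ^ #{i | w i ≠ 0} * ∏ i with w i ≠ 0, w i) *
        gaussSum ((quadraticChar F).ringHomComp (Int.castRingHom R)) ψ ^ #{i | w i ≠ 0} *
        (Fintype.card F : R) ^ #{i | w i = 0}) := by
  rw [card_mul_card_filter_eq_zero hψ, ← add_sum_erase univ _ (mem_univ (0 : F))]
  congr 1
  · simp
  · exact sum_congr rfl fun a ha => sum_addChar_mul_sum_mul_sq hF hψ w (ne_of_mem_erase ha)

lemma card_zeros_sum_mul_sq_of_odd (hF : ringChar F ≠ 2) {w : ι → F}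
    (hw : Odd #{i | w i ≠ 0}) :
    Fintype.card F * #{x : ι → F | ∑ i, w i * x i ^ 2 = 0} =
      Fintype.card F ^ Fintype.card ι := by
  obtain ⟨n, ψ, hψ⟩ := exists_isPrimitive_addChar_cyclotomicField F
  have hχ (a : F) : quadraticChar F (a ^ #{i | w i ≠ 0}) = quadraticChar F a := by
    rw [map_pow, ← MulChar.pow_apply' _ hw.pos.ne', (quadraticChar_isQuadratic F).pow_odd hw]
  have hsum : ∑ a ∈ univ.erase 0, quadraticChar F (a ^ #{i | w i ≠ 0}) = 0 := by
    simp_rw [hχ]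
    rw [sum_erase _ (quadraticChar_zero), quadraticChar_sum_zero hF]
  have h := card_mul_card_zeros_sum_mul_sq hF hψ w
  simp_rw [map_mul, Int.cast_mul, ← sum_mul, ← Int.cast_sum, hsum] at h
  simp only [Int.cast_zero, zero_mul, add_zero] at h
  exact_mod_cast h

lemma card_zeros_sum_mul_sq_of_even (hF : ringChar F ≠ 2) {w : ι → F} {m : ℕ}
    (hw : #{i | w i ≠ 0} = 2 * m) :
    (Fintype.card F * #{x : ι → F | ∑ i, w i * x i ^ 2 = 0} : ℤ) =
      Fintype.card F ^ Fintype.card ι + quadraticChar F ((-1) ^ m * ∏ i with w i ≠ 0, w i) *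
        Fintype.card F ^ (Fintype.card ι - m) * (Fintype.card F - 1) := by
  obtain ⟨n, ψ, hψ⟩ := exists_isPrimitive_addChar_cyclotomicField F
  have hχ (a : F) (ha : a ∈ univ.erase 0) : quadraticChar F (a ^ (2 * m)) = 1 := by
    rw [pow_mul, map_pow, quadraticChar_sq_one' (ne_of_mem_erase ha), one_pow]
  have hcard : #{i | w i = 0} + 2 * m = Fintype.card ι := by
    rw [← hw, card_filter_add_card_filter_not, card_univ]
  have hgauss : gaussSum ((quadraticChar F).ringHomComp (Int.castRingHom _)) ψ ^ 2 =
      quadraticChar F (-1) * Fintype.card F := by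
    rw [gaussSum_sq _ ((quadraticChar_isQuadratic F).comp _) hψ]
    · simp
    · exact (MulChar.ringHomComp_eq_one_iff Int.cast_injective).not.2 (quadraticChar_ne_one hF)
  have h := card_mul_card_zeros_sum_mul_sq hF hψ w
  simp_rw [hw, map_mul, Int.cast_mul] at h
  rw [sum_congr rfl fun a ha => by rw [hχ a ha, pow_mul, hgauss], sum_const,
    card_erase_of_mem (mem_univ _), card_univ] at h
  rw [nsmul_eq_mul, Nat.cast_pred Fintype.card_pos] at h
  have hexp : Fintype.card ι - m = #{i | w i = 0} + m := by lia
  rw [hexp, map_mul, map_pow]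
  apply Int.cast_injective (α := CyclotomicField n ℚ)
  push_cast
  rw [h]
  ring

lemma abs_card_mul_card_zeros_sub_le (hF : ringChar F ≠ 2) {w : ι → F} {m : ℕ}
    (hw : 2 * m ≤ #{i | w i ≠ 0} + 1) :
    |(Fintype.card F * #{x : ι → F | ∑ i, w i * x i ^ 2 = 0} : ℤ) -
      Fintype.card F ^ Fintype.card ι| ≤
      Fintype.card F ^ (Fintype.card ι - m) * (Fintype.card F - 1) := by
  have hq : (1 : ℤ) ≤ Fintype.card F := by exact_mod_cast Fintype.card_pos
  have hq' : (0 : ℤ) ≤ Fintype.card F - 1 := by linarith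
  obtain ⟨k, hk⟩ | hodd := Nat.even_or_odd #{i | w i ≠ 0}
  · rw [← two_mul] at hk
    have hχ (a : F) : |quadraticChar F a| ≤ 1 := by
      by_cases ha : a = 0
      · simp [ha]
      · obtain h | h := quadraticChar_dichotomy ha <;> simp [h]
    rw [card_zeros_sum_mul_sq_of_even hF hk, add_sub_cancel_left, abs_mul, abs_mul,
      abs_of_nonneg hq', abs_pow, Nat.abs_cast]
    gcongr
    calc _ ≤ 1 * (Fintype.card F : ℤ) ^ (Fintype.card ι - k) := by gcongr; exact hχ _
      _ ≤ _ := by rw [one_mul]; gcongr; lia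
  · rw [sub_eq_zero.2 (by exact_mod_cast card_zeros_sum_mul_sq_of_odd hF hodd), abs_zero]
    positivity

end DiagonalForms

lemma card_zeros_add_sum_card_zeros_pencil {F X : Type*} [Field F] [Fintype F] [DecidableEq F]
    [Fintype X] (f g : X → F) :
    #{x | f x = 0} + ∑ l, #{x | l * f x + g x = 0} =
      Fintype.card X + Fintype.card F * #{x | f x = 0 ∧ g x = 0} := by
  have hpoint (x : X) : (if f x = 0 then 1 else 0) + #{l | l * f x + g x = 0} =
      1 + Fintype.card F * if f x = 0 ∧ g x = 0 then 1 else 0 := by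
    by_cases hf : f x = 0
    · by_cases hg : g x = 0 <;> simp [hf, hg]
    · have hroot : ({l | l * f x + g x = 0} : Finset F) = {-g x / f x} := by
        ext l
        simp [eq_div_iff hf, add_eq_zero_iff_eq_neg]
      simp [hf, hroot]
  calc #{x | f x = 0} + ∑ l, #{x | l * f x + g x = 0}
      = ∑ x, ((if f x = 0 then 1 else 0) + #{l | l * f x + g x = 0}) := by
        rw [sum_add_distrib, ← card_filter]
        simp_rw [card_filter]
        rw [sum_comm]
    _ = _ := by simp_rw [hpoint, sum_add_distrib, ← mul_sum, ← card_filter]; simp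

lemma ncard_le_card_mul_ncard_of_forall_exists_smul {G X : Type*} [SMul G X] [Finite G]
    {S W : Set X} (hW : W.Finite) (h : ∀ x ∈ S, ∃ a : G, ∃ w ∈ W, x = a • w) :
    S.ncard ≤ Nat.card G * W.ncard := by
  have hfin : ((Set.univ : Set G) ×ˢ W).Finite := Set.finite_univ.prod hW
  calc S.ncard ≤ ((fun p : G × X => p.1 • p.2) '' (Set.univ ×ˢ W)).ncard := by
        refine Set.ncard_le_ncard (fun x hx => ?_) (hfin.image _)
        obtain ⟨a, w, hw, rfl⟩ := h x hx
        exact ⟨(a, w), ⟨trivial, hw⟩, rfl⟩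
    _ ≤ Nat.card G * W.ncard := by
        simpa [Set.ncard_prod] using Set.ncard_image_le hfin (f := fun p : G × X => p.1 • p.2)

lemma ncard_cone_le_card_units_mul_card {K V : Type*} [Field K] [Finite K] [AddCommGroup V]
    [Module K V] [Finite V] (P : V → Prop) :
    {v | v ≠ 0 ∧ P v}.ncard ≤ Nat.card Kˣ * Nat.card {p : Projectivization K V |
      ∃ (v : V) (hv : v ≠ 0), p = Projectivization.mk K v hv ∧ P v} := by
  rw [Nat.card_coe_set_eq]
  refine (ncard_le_card_mul_ncard_of_forall_exists_smul (Set.toFinite _) ?_).trans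
    (Nat.mul_le_mul_left _ (Set.ncard_image_le (Set.toFinite _) (f := Projectivization.rep)))
  rintro v ⟨hv, hPv⟩
  obtain ⟨a, ha⟩ := Projectivization.exists_smul_eq_mk_rep K v hv
  exact ⟨a⁻¹, _, ⟨_, ⟨v, hv, rfl, hPv⟩, rfl⟩, by rw [← ha, inv_smul_smul]⟩

lemma exists_smul_add_smul_eq_zero_of_rank_ne_two {K n : Type*} [Field K] [Fintype n]
    {M : Matrix (Fin 2) n K} (hM : M.rank ≠ 2) :
    ∃ a b : K, (a ≠ 0 ∨ b ≠ 0) ∧ a • M 0 + b • M 1 = 0 := by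
  by_contra! h
  have hli : LinearIndependent K ![M 0, M 1] := by
    rw [LinearIndependent.pair_iff]
    intro a b hab
    by_contra hne
    exact h a b (by tauto) hab
  have hrow : M.row = ![M 0, M 1] := by
    ext i
    fin_cases i <;> rfl
  exact hM (by simpa using (hrow ▸ hli).rank_matrix)

lemma exists_forall_mul_sq_eq_imp_eq_or_eq_neg {R : Type*} [CommRing R] [NoZeroDivisors R]
    {a : R} (ha : a ≠ 0) (c : R) : ∃ e, ∀ x, a * x ^ 2 = c → x = e ∨ x = -e := by
  by_cases h : ∃ e, a * e ^ 2 = c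
  · obtain ⟨e, he⟩ := h
    exact ⟨e, fun x hx => sq_eq_sq_iff_eq_or_eq_neg.1 (mul_left_cancel₀ ha (hx.trans he.symm))⟩
  · exact ⟨0, fun x hx => (h ⟨x, hx⟩).elim⟩

section Pencil

variable {F : Type*} [Field F]

/-- The quadratic form `f` of the first equation of the surface. -/
def firstQuadric (D : F) (t : Fin 5 → F) : F :=
  t 0 * t 1 - (t 2 ^ 2 - D * t 3 ^ 2)

/-- The quadratic form `g` of the second equation of the surface. -/
def secondQuadric (A B D : F) (t : Fin 5 → F) : F :=
  (t 0 + A * t 1) * (t 0 + B * t 1) - (t 2 ^ 2 - D * t 4 ^ 2)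

lemma sPoint_iff {A B D : F} {t : Fin 5 → F} :
    SPoint A B D t ↔ firstQuadric D t = 0 ∧ secondQuadric A B D t = 0 := by
  simp only [SPoint, firstQuadric, secondQuadric, sub_eq_zero]

/-- Four times the determinant of the binary form `t₀² + (l + A + B) t₀ t₁ + A B t₁²`, which is the
part of the pencil member `l f + g` involving `t₀` and `t₁`. -/
def pencilDisc (A B l : F) : F := 4 * A * B - (l + A + B) ^ 2

/-- The coefficients of a diagonal form equivalent to the pencil member `l f + g`. -/
def pencilWeights (A B D l : F) : Fin 5 → F := ![1, pencilDisc A B l, -(l + 1), l * D, D]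

lemma card_pencilWeights_ne_zero [DecidableEq F] (A B : F) {D : F} (hD : D ≠ 0) (l : F) :
    #{i | pencilWeights A B D l i ≠ 0} = 2 + (if pencilDisc A B l = 0 then 0 else 1) +
      (if l = -1 then 0 else 1) + (if l = 0 then 0 else 1) := by
  rw [card_filter, Fin.sum_univ_five]
  simp only [pencilWeights, neg_add_rev, Fin.isValue, Matrix.cons_val_zero, Matrix.cons_val_one,
    Matrix.cons_val, ne_eq, one_ne_zero, not_false_eq_true, ↓reduceIte, ite_not,
    add_eq_zero_iff_eq_neg, neg_neg, eq_comm (a := (-1 : F)), mul_eq_zero, hD, or_false]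
  ring

lemma three_le_card_pencilWeights_ne_zero [DecidableEq F] (A B : F) {D : F} (hD : D ≠ 0) (l : F) :
    3 ≤ #{i | pencilWeights A B D l i ≠ 0} := by
  rw [card_pencilWeights_ne_zero A B hD]
  by_cases hl : l = 0
  · simp [hl]
  · simp only [hl, if_false]
    lia

section Counting

variable [Fintype F] [DecidableEq F]

lemma card_zeros_firstQuadric (hF : ringChar F ≠ 2) (D : F) :
    #{t | firstQuadric D t = 0} =
      #{x : Fin 5 → F | ∑ i, (![1, -1, -1, D, 0] : Fin 5 → F) i * x i ^ 2 = 0} := by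
  let e (x : Fin 5 → F) : Fin 5 → F := ![x 0 - x 1, x 0 + x 1, x 2, x 3, x 4]
  have he : e.Injective := by
    intro x y h
    simp only [e, Matrix.vecCons_inj] at h
    obtain ⟨h0, h1, h2, h3, h4, -⟩ := h
    have hx0 : x 0 = y 0 := mul_left_cancel₀ (Ring.two_ne_zero hF) (by linear_combination h0 + h1)
    have hx1 : x 1 = y 1 := by linear_combination h1 - hx0
    ext i
    fin_cases i <;> assumption
  refine (card_bijective e (Finite.injective_iff_bijective.1 he) fun x => ?_).symm
  suffices firstQuadric D (e x) = ∑ i, (![1, -1, -1, D, 0] : Fin 5 → F) i * x i ^ 2 by simp [this]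
  simp only [Fin.sum_univ_five, firstQuadric, e, Matrix.cons_val]
  ring

lemma card_zeros_pencil (hF : ringChar F ≠ 2) (A B D l : F) :
    #{t | l * firstQuadric D t + secondQuadric A B D t = 0} =
      #{x : Fin 5 → F | ∑ i, pencilWeights A B D l i * x i ^ 2 = 0} := by
  let e (x : Fin 5 → F) : Fin 5 → F := ![x 0 - (l + A + B) * x 1, 2 * x 1, x 2, x 3, x 4]
  have he : e.Injective := by
    intro x y h
    simp only [e, Matrix.vecCons_inj] at h
    obtain ⟨h0, h1, h2, h3, h4, -⟩ := h
    have hx1 : x 1 = y 1 := mul_left_cancel₀ (Ring.two_ne_zero hF) h1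
    have hx0 : x 0 = y 0 := by linear_combination h0 + (l + A + B) * hx1
    ext i
    fin_cases i <;> assumption
  refine (card_bijective e (Finite.injective_iff_bijective.1 he) fun x => ?_).symm
  suffices l * firstQuadric D (e x) + secondQuadric A B D (e x) =
    ∑ i, pencilWeights A B D l i * x i ^ 2 by simp [this]
  simp only [Fin.sum_univ_five, firstQuadric, secondQuadric, pencilWeights, pencilDisc, e,
    Matrix.cons_val]
  ring

/-- The parameters `l` at which the pencil member `l f + g` has even rank. -/
def evenRankParams (A B D : F) : Finset F := {l | Even #{i | pencilWeights A B D l i ≠ 0}}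

lemma evenRankParams_subset (A B : F) {D : F} (hD : D ≠ 0) :
    evenRankParams A B D ⊆
      ({0, -1} : Finset F).filter (pencilDisc A B · ≠ 0) ∪
        ({l | pencilDisc A B l = 0} : Finset F) := by
  intro l hl
  rw [evenRankParams, mem_filter_univ, card_pencilWeights_ne_zero A B hD] at hl
  by_cases hdisc : pencilDisc A B l = 0
  · simp [hdisc]
  · have hl' : l = 0 ∨ l = -1 := by
      by_contra! h
      rw [if_neg hdisc, if_neg h.1, if_neg h.2] at hl
      exact absurd hl (by decide)
    simp [hdisc, hl']

lemma card_pencilDisc_roots (hF : ringChar F ≠ 2) (A B : F) :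
    (#{l | pencilDisc A B l = 0} : ℤ) = quadraticChar F (4 * A * B) + 1 := by
  rw [← quadraticChar_card_sqrts hF, Set.toFinset_ofPred]
  congr 1
  refine card_equiv (Equiv.addRight (A + B)) fun l => ?_
  rw [mem_filter_univ, mem_filter_univ, pencilDisc, sub_eq_zero, eq_comm, add_assoc,
    Equiv.coe_addRight]

lemma card_pencilDisc_roots_le_two (hF : ringChar F ≠ 2) (A B : F) :
    #{l | pencilDisc A B l = 0} ≤ 2 := by
  have h := card_pencilDisc_roots hF A B
  by_cases hAB : 4 * A * B = 0
  · rw [hAB, quadraticChar_zero] at h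
    lia
  · obtain hχ | hχ := quadraticChar_dichotomy hAB <;> lia

lemma card_evenRankParams_le (hF : ringChar F ≠ 2) (A B : F) {D : F} (hD : D ≠ 0) :
    #(evenRankParams A B D) ≤ 4 := by
  calc _ ≤ #(({0, -1} : Finset F).filter (pencilDisc A B · ≠ 0)) + #{l | pencilDisc A B l = 0} :=
        (card_le_card (evenRankParams_subset A B hD)).trans (card_union_le _ _)
    _ ≤ 2 + 2 := add_le_add ((card_filter_le _ _).trans card_le_two)
        (card_pencilDisc_roots_le_two hF A B)

lemma card_evenRankParams_le_of_multiple_root (hF : ringChar F ≠ 2) {A B D l : F} (hD : D ≠ 0)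
    (hdisc : pencilDisc A B l = 0) (hl : l = 0 ∨ l = -1 ∨ A * B = 0) :
    #(evenRankParams A B D) ≤ 3 := by
  have hE := (card_le_card (evenRankParams_subset A B hD)).trans (card_union_le _ _)
  have hlin : #({0, -1} : Finset F) ≤ 2 := card_le_two
  have hroots := card_pencilDisc_roots_le_two hF A B
  by_cases hAB : A * B = 0
  · have h := card_pencilDisc_roots hF A B
    rw [mul_assoc, hAB, mul_zero, quadraticChar_zero] at h
    have := card_filter_le ({0, -1} : Finset F) (pencilDisc A B · ≠ 0)
    lia
  · have hmem : l ∈ ({0, -1} : Finset F) := by simpa [hAB] using hl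
    have : #(({0, -1} : Finset F).filter (pencilDisc A B · ≠ 0)) < #({0, -1} : Finset F) :=
      card_lt_card (filter_ssubset.2 ⟨l, hmem, not_not.2 hdisc⟩)
    lia

lemma sub_le_card_mul_card_zeros_firstQuadric (hF : ringChar F ≠ 2) {D : F} (hD : D ≠ 0) :
    (Fintype.card F : ℤ) ^ 5 - Fintype.card F ^ 3 * (Fintype.card F - 1) ≤
      Fintype.card F * #{t | firstQuadric D t = 0} := by
  have hw : 2 * 2 ≤ #{i | (![1, -1, -1, D, 0] : Fin 5 → F) i ≠ 0} + 1 := by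
    rw [card_filter, Fin.sum_univ_five]
    simp [hD]
  rw [card_zeros_firstQuadric hF, sub_le_comm, ← neg_sub, neg_le]
  exact (abs_le.1 (abs_card_mul_card_zeros_sub_le hF hw)).1

lemma sub_le_card_mul_card_zeros_pencil (hF : ringChar F ≠ 2) (A B : F) {D : F} (hD : D ≠ 0)
    (l : F) :
    (Fintype.card F : ℤ) ^ 5 -
        (if l ∈ evenRankParams A B D then (Fintype.card F : ℤ) ^ 3 * (Fintype.card F - 1) else 0) ≤
      Fintype.card F * #{t | l * firstQuadric D t + secondQuadric A B D t = 0} := by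
  rw [card_zeros_pencil hF]
  split_ifs with hl
  · have hw : 2 * 2 ≤ #{i | pencilWeights A B D l i ≠ 0} + 1 :=
      Nat.succ_le_succ (three_le_card_pencilWeights_ne_zero A B hD l)
    rw [sub_le_comm, ← neg_sub, neg_le]
    exact (abs_le.1 (abs_card_mul_card_zeros_sub_le hF hw)).1
  · rw [evenRankParams, mem_filter_univ, Nat.not_even_iff_odd] at hl
    rw [sub_zero]
    exact_mod_cast (card_zeros_sum_mul_sq_of_odd hF hl).ge

lemma sub_le_card_zeros_firstQuadric_and_secondQuadric (hF : ringChar F ≠ 2) (A B : F) {D : F}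
    (hD : D ≠ 0) :
    (Fintype.card F : ℤ) ^ 3 - (#(evenRankParams A B D) + 1) *
        (Fintype.card F * (Fintype.card F - 1)) ≤
      #{t | firstQuadric D t = 0 ∧ secondQuadric A B D t = 0} := by
  have hfirst := sub_le_card_mul_card_zeros_firstQuadric hF hD
  have hmembers := sum_le_sum fun l (_ : l ∈ univ) =>
    sub_le_card_mul_card_zeros_pencil hF A B hD l
  have hcount := congrArg (Nat.cast : ℕ → ℤ)
    (card_zeros_add_sum_card_zeros_pencil (firstQuadric D) (secondQuadric A B D))
  simp only [sum_sub_distrib, sum_const, card_univ, nsmul_eq_mul, sum_ite_mem, univ_inter,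
    ← mul_sum] at hmembers
  push_cast [Fintype.card_fun, Fintype.card_fin] at hcount
  have hq : (0 : ℤ) < Fintype.card F := Nat.cast_pos.2 Fintype.card_pos
  refine le_of_mul_le_mul_left ?_ (pow_pos hq 2)
  linear_combination hfirst + hmembers + Fintype.card F * hcount

end Counting

section Singular

/-- `t` lies on the vertex of the pencil member `l f + g`, written in the coordinates that
diagonalise this member; the parameter `D ≠ 0` then drops out. -/
structure IsVertex (A B l : F) (t : Fin 5 → F) : Prop where
  two_mul_add : 2 * t 0 + (l + A + B) * t 1 = 0
  pencilDisc_mul : pencilDisc A B l * t 1 = 0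
  add_one_mul : (l + 1) * t 2 = 0
  mul_apply_three : l * t 3 = 0
  apply_four : t 4 = 0

lemma exists_isVertex_of_rank_jacobian_ne_two (hF : ringChar F ≠ 2) {A B D : F} (hD : D ≠ 0)
    {t : Fin 5 → F} (ht : t ≠ 0) (hS : SPoint A B D t) (hr : (jacobian A B D t).rank ≠ 2) :
    ∃ l, IsVertex A B l t := by
  have h2 : (2 : F) ≠ 0 := Ring.two_ne_zero hF
  obtain ⟨a, b, hab, h⟩ := exists_smul_add_smul_eq_zero_of_rank_ne_two hr
  have hb : b ≠ 0 := by
    rintro rfl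
    have ha : a ≠ 0 := by simpa using hab
    have hrow : jacobian A B D t 0 = 0 := by simpa [ha] using h
    obtain ⟨h1, h0, h2, h3⟩ : t 1 = 0 ∧ t 0 = 0 ∧ t 2 = 0 ∧ t 3 = 0 := by
      simpa [jacobian, funext_iff, Fin.forall_fin_succ, h2, hD] using hrow
    have h4 : t 4 = 0 := by simpa [h0, h1, h2, hD] using hS.2
    refine ht (funext fun i => ?_)
    fin_cases i <;> assumption
  have hcol (j : Fin 5) : a / b * jacobian A B D t 0 j + jacobian A B D t 1 j = 0 := by
    have := congrFun h j
    simp only [Pi.add_apply, Pi.smul_apply, smul_eq_mul, Pi.zero_apply] at this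
    field_simp
    rwa [mul_zero]
  set l := a / b
  have h0 : l * t 1 + (2 * t 0 + (A + B) * t 1) = 0 := hcol 0
  have h1 : l * t 0 + ((A + B) * t 0 + 2 * A * B * t 1) = 0 := hcol 1
  have h2' : l * (-2 * t 2) + -2 * t 2 = 0 := hcol 2
  have h3 : l * (2 * D * t 3) + 0 = 0 := hcol 3
  have h4 : l * 0 + 2 * D * t 4 = 0 := hcol 4
  refine ⟨l, ?_, ?_, ?_, ?_, ?_⟩
  · linear_combination h0
  · rw [pencilDisc]
    linear_combination 2 * h1 - (l + A + B) * h0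
  · exact (mul_eq_zero.1 (by linear_combination -h2' : 2 * ((l + 1) * t 2) = 0)).resolve_left h2
  · refine (mul_eq_zero.1 (?_ : 2 * D * (l * t 3) = 0)).resolve_left (mul_ne_zero h2 hD)
    linear_combination h3
  · simpa [h2, hD] using h4

namespace IsVertex

variable {A B D l : F} {t : Fin 5 → F}

lemma apply_one_ne_zero (hv : IsVertex A B l t) (hF : ringChar F ≠ 2) (hD : D ≠ 0) (ht : t ≠ 0)
    (hS : SPoint A B D t) : t 1 ≠ 0 := by
  intro h1
  have h0 : t 0 = 0 := by simpa [h1, Ring.two_ne_zero hF] using hv.two_mul_add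
  have h4 := hv.apply_four
  have h2 : t 2 = 0 := pow_eq_zero_iff two_ne_zero |>.1 (by simpa [h0, h1, h4] using hS.2.symm)
  have h3 : t 3 = 0 := by simpa [h0, h2, hD] using hS.1
  refine ht (funext fun i => ?_)
  fin_cases i <;> assumption

lemma eq_zero_or_eq_neg_one_or_mul_eq_zero (hv : IsVertex A B l t) (hS : SPoint A B D t)
    (h1 : t 1 ≠ 0) :
    l = 0 ∨ l = -1 ∨ A * B = 0 ∧ t 0 = 0 ∧ t 2 = 0 ∧ t 3 = 0 := by
  refine or_iff_not_imp_left.2 fun hl0 => or_iff_not_imp_left.2 fun hl1 => ?_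
  have h2 : t 2 = 0 := (mul_eq_zero.1 hv.add_one_mul).resolve_left fun h =>
    hl1 (eq_neg_of_add_eq_zero_left h)
  have h3 : t 3 = 0 := (mul_eq_zero.1 hv.mul_apply_three).resolve_left hl0
  have h0 : t 0 = 0 := by simpa [h1, h2, h3] using hS.1
  have hAB : A = 0 ∨ B = 0 := by simpa [h0, h1, h2, hv.apply_four] using hS.2
  exact ⟨mul_eq_zero.2 hAB, h0, h2, h3⟩

end IsVertex

lemma exists_vertex_representatives (hF : ringChar F ≠ 2) (A B : F) {D : F} (hD : D ≠ 0) :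
    ∃ W : Finset (Fin 5 → F), #W ≤ 5 ∧
      ∀ l t, IsVertex A B l t → SPoint A B D t → t 1 ≠ 0 → ∃ w ∈ W, t = t 1 • w := by
  classical
  have h2 : (2 : F) ≠ 0 := Ring.two_ne_zero hF
  obtain ⟨e, he⟩ := exists_forall_mul_sq_eq_imp_eq_or_eq_neg hD ((A + B) / 2)
  obtain ⟨f, hf⟩ := exists_forall_mul_sq_eq_imp_eq_or_eq_neg one_ne_zero (-(-1 + A + B) / 2)
  -- In order: two vertices with `l = 0`, two with `l = -1`, and the one common to all other `l`.
  refine ⟨{![-(A + B) / 2, 1, 0, e, 0], ![-(A + B) / 2, 1, 0, -e, 0],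
    ![-(-1 + A + B) / 2, 1, f, 0, 0], ![-(-1 + A + B) / 2, 1, -f, 0, 0], ![0, 1, 0, 0, 0]},
    card_le_five, fun l t hv hS h1 => ?_⟩
  have hext {a b c : F} (h0 : t 0 / t 1 = a) (h2 : t 2 / t 1 = b) (h3 : t 3 / t 1 = c) :
      t = t 1 • ![a, 1, b, c, 0] := by
    ext i
    fin_cases i <;> simp [← h0, ← h2, ← h3, hv.apply_four, mul_div_cancel₀ _ h1]
  have h0 : t 0 / t 1 = -(l + A + B) / 2 := by
    rw [div_eq_div_iff h1 h2]
    linear_combination hv.two_mul_add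
  have hS1 : t 0 / t 1 = (t 2 / t 1) ^ 2 - D * (t 3 / t 1) ^ 2 := by
    field_simp
    linear_combination hS.1
  obtain rfl | rfl | ⟨-, h0', h2', h3'⟩ := hv.eq_zero_or_eq_neg_one_or_mul_eq_zero hS h1
  · have h2' : t 2 / t 1 = 0 := by simpa [h1] using hv.add_one_mul
    rw [zero_add] at h0
    obtain h3 | h3 := he (t 3 / t 1) (by linear_combination hS1 - h0 + t 2 / t 1 * h2')
    · exact ⟨_, by simp, hext h0 h2' h3⟩
    · exact ⟨_, by simp, hext h0 h2' h3⟩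
  · have h3' : t 3 / t 1 = 0 := by simpa [h1] using hv.mul_apply_three
    obtain h2 | h2 := hf (t 2 / t 1) (by linear_combination h0 - hS1 + D * (t 3 / t 1) * h3')
    · exact ⟨_, by simp, hext h0 h2 h3'⟩
    · exact ⟨_, by simp, hext h0 h2 h3'⟩
  · exact ⟨![0, 1, 0, 0, 0], by simp,
      hext (by rw [h0', zero_div]) (by rw [h2', zero_div]) (by rw [h3', zero_div])⟩

lemma ncard_singular_le [Finite F] (hF : ringChar F ≠ 2) (A B : F) {D : F} (hD : D ≠ 0) :
    {t | t ≠ 0 ∧ SPoint A B D t ∧ (jacobian A B D t).rank ≠ 2}.ncard ≤ Nat.card Fˣ * 5 := by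
  obtain ⟨W, hW, hrep⟩ := exists_vertex_representatives hF A B hD
  refine (ncard_le_card_mul_ncard_of_forall_exists_smul (G := Fˣ) W.finite_toSet ?_).trans
    (Nat.mul_le_mul_left _ (by rwa [Set.ncard_coe_finset]))
  rintro t ⟨ht, hS, hr⟩
  obtain ⟨l, hv⟩ := exists_isVertex_of_rank_jacobian_ne_two hF hD ht hS hr
  have h1 := hv.apply_one_ne_zero hF hD ht hS
  obtain ⟨w, hw, htw⟩ := hrep l t hv hS h1
  exact ⟨Units.mk0 (t 1) h1, w, hw, htw⟩

end Singular

section SmoothLocus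

variable [Fintype F] [DecidableEq F]

lemma card_evenRankParams_mul_add_ncard_singular_le (hF : ringChar F ≠ 2)
    (hcard : 5 ≤ Fintype.card F) (A B : F) {D : F} (hD : D ≠ 0) :
    (#(evenRankParams A B D) * (Fintype.card F * (Fintype.card F - 1)) +
      {t | t ≠ 0 ∧ SPoint A B D t ∧ (jacobian A B D t).rank ≠ 2}.ncard : ℤ) ≤
    4 * (Fintype.card F * (Fintype.card F - 1)) := by
  have hq : (5 : ℤ) ≤ Fintype.card F := by exact_mod_cast hcard
  have hprod : 0 ≤ (Fintype.card F : ℤ) * (Fintype.card F - 1) :=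
    mul_nonneg (by linarith) (by linarith)
  obtain hempty | ⟨t, ht, hS, hr⟩ :=
    {t | t ≠ 0 ∧ SPoint A B D t ∧ (jacobian A B D t).rank ≠ 2}.eq_empty_or_nonempty
  · rw [hempty, Set.ncard_empty, Nat.cast_zero, add_zero]
    gcongr
    exact_mod_cast card_evenRankParams_le hF A B hD
  · obtain ⟨l, hv⟩ := exists_isVertex_of_rank_jacobian_ne_two hF hD ht hS hr
    have h1 := hv.apply_one_ne_zero hF hD ht hS
    have hdisc := (mul_eq_zero.1 hv.pencilDisc_mul).resolve_right h1
    have hl : l = 0 ∨ l = -1 ∨ A * B = 0 :=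
      (hv.eq_zero_or_eq_neg_one_or_mul_eq_zero hS h1).imp_right (Or.imp_right And.left)
    have hE : (#(evenRankParams A B D) : ℤ) ≤ 3 := by
      exact_mod_cast card_evenRankParams_le_of_multiple_root hF hD hdisc hl
    have hsing := (Nat.cast_le (α := ℤ)).2 (ncard_singular_le hF A B hD)
    rw [Nat.card_units, Nat.card_eq_fintype_card, Nat.cast_mul,
      Nat.cast_pred Fintype.card_pos] at hsing
    linear_combination mul_le_mul_of_nonneg_right hE hprod + hsing +
      mul_le_mul_of_nonneg_right hq (by linarith : (0 : ℤ) ≤ Fintype.card F - 1)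

lemma card_zeros_le_ncard_smooth_add_ncard_singular (A B D : F) :
    #{t | firstQuadric D t = 0 ∧ secondQuadric A B D t = 0} ≤
      1 + {t | t ≠ 0 ∧ SPoint A B D t ∧ (jacobian A B D t).rank = 2}.ncard +
        {t | t ≠ 0 ∧ SPoint A B D t ∧ (jacobian A B D t).rank ≠ 2}.ncard := by
  rw [← Set.ncard_coe_finset, ← Set.ncard_singleton (0 : Fin 5 → F)]
  refine (Set.ncard_le_ncard (fun t ht => ?_) (Set.toFinite _)).trans
    ((Set.ncard_union_le _ _).trans (Nat.add_le_add_right (Set.ncard_union_le _ _) _))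
  have hS : SPoint A B D t := sPoint_iff.2 (by simpa using ht)
  by_cases h0 : t = 0
  · exact .inl (.inl h0)
  · by_cases hr : (jacobian A B D t).rank = 2
    · exact .inl (.inr ⟨h0, hS, hr⟩)
    · exact .inr ⟨h0, hS, hr⟩

end SmoothLocus

end Pencil

/-- Over a finite field `F` with `ℓ := #F ≥ 5` elements of characteristic `≠ 2`, for any
`A, B, D ∈ F` with `D ≠ 0`, the number of regular points of `S^{(D;A,B)}` in `P⁴(F)` is
at least `ℓ² − 4ℓ + 1`. -/
theorem count_regular_points_over_finite_field (F : Type*) [Field F] [Fintype F]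
    (hchar : ringChar F ≠ 2) (hcard : 5 ≤ Fintype.card F) (A B D : F) (hD : D ≠ 0) :
    (Fintype.card F : ℤ) ^ 2 - 4 * (Fintype.card F : ℤ) + 1 ≤
      Nat.card {p : Projectivization F (Fin 5 → F) |
        ∃ (t : Fin 5 → F) (ht : t ≠ 0), p = Projectivization.mk F t ht ∧
          SPoint A B D t ∧ (jacobian A B D t).rank = 2} := by
  classical
  have hzeros := sub_le_card_zeros_firstQuadric_and_secondQuadric hchar A B hD
  have hsplit := (Nat.cast_le (α := ℤ)).2 (card_zeros_le_ncard_smooth_add_ncard_singular A B D)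
  have hsing := card_evenRankParams_mul_add_ncard_singular_le hchar hcard A B hD
  have hcone := (Nat.cast_le (α := ℤ)).2 (ncard_cone_le_card_units_mul_card (K := F)
    fun t => SPoint A B D t ∧ (jacobian A B D t).rank = 2)
  rw [Nat.card_units, Nat.card_eq_fintype_card (α := F), Nat.cast_mul,
    Nat.cast_pred Fintype.card_pos] at hcone
  push_cast at hsplit
  have hq : (0 : ℤ) < Fintype.card F - 1 := by
    rw [sub_pos]
    exact_mod_cast Fintype.one_lt_card
  refine le_of_mul_le_mul_left ?_ hq
  linear_combination hzeros + hsplit + hsing + hcone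
end
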